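/- arXiv:2105.13130 — 4 statements merged into one kernel-verified Lean document; each statement's English description precedes it below -/
import Mathlib

section
/- Generalized Grassmann identity: for every n ≥ 2 and all a, b, c ∈ ℝⁿ, ⟦a⟧ₙᵀ (b ×ₙ c) = ⟨a, b⟩·c − ⟨a, c⟩·b. -/
open Matrix BigOperators

/-- Index set `Pₙ = {(i,j) : 1 ≤ i < j ≤ n}` of strictly increasing pairs;
`ℝ^{n(n-1)/2}` is identified with `PairIdx n → ℝ`. -/
abbrev PairIdx (n : ℕ) := {p : Fin n × Fin n // p.1 < p.2}

/-- The generalized cross product `a ×ₙ b ∈ ℝ^{n(n-1)/2}`,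
with `(a ×ₙ b)_{(i,j)} = aᵢ bⱼ - aⱼ bᵢ` for `i < j`. -/
def crossN (n : ℕ) (a b : Fin n → ℝ) : PairIdx n → ℝ :=
  fun p => a p.1.1 * b p.1.2 - a p.1.2 * b p.1.1

/-- The matrix `⟦a⟧ₙ` with entries `⟦a⟧ₙ_{(i,j),k} = aᵢ δ_{jk} - aⱼ δ_{ik}`,
so that `⟦a⟧ₙ b = a ×ₙ b` for all `b`. -/
def crossMat (n : ℕ) (a : Fin n → ℝ) : Matrix (PairIdx n) (Fin n) ℝ :=
  Matrix.of fun p k =>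
    a p.1.1 * (if p.1.2 = k then 1 else 0) - a p.1.2 * (if p.1.1 = k then 1 else 0)

/-!
A vector indexed by the pairs `i < j` is the part above the diagonal of a unique skew-symmetric
matrix `W`, and under this identification `⟦a⟧ₙᵀ` acts as `W ↦ a ᵥ* W`: the two terms of
`⟦a⟧ₙ` at `(i, j)` account for the entries of `W` at `(i, j)` and `(j, i)`. The vector `b ×ₙ c`
corresponds to `W = b cᵀ - c bᵀ`, and `a ᵥ* (b cᵀ - c bᵀ) = ⟨a, b⟩ c - ⟨a, c⟩ b`.
-/

theorem sum_lt_add_swap_eq_sum {ι M : Type*} [Fintype ι] [LinearOrder ι] [AddCommMonoid M]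
    (f : ι × ι → M) (f_diag : ∀ i, f (i, i) = 0) :
    ∑ p : {p : ι × ι // p.1 < p.2}, (f p + f p.1.swap) = ∑ p, f p := by
  calc ∑ p : {p : ι × ι // p.1 < p.2}, (f p + f p.1.swap)
      = ∑ p : ι × ι with p.1 < p.2, (f p + f p.swap) :=
        (Finset.sum_subtype _ (by simp) fun p => f p + f p.swap).symm
    _ = ∑ p : ι × ι with p.1 < p.2, f p + ∑ p : ι × ι with p.2 < p.1, f p := by
        rw [Finset.sum_add_distrib]
        congr 1
        exact Finset.sum_equiv (Equiv.prodComm ι ι) (by simp) (by simp)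
    _ = ∑ p, f p := by
        simp only [Finset.sum_filter, ← Finset.sum_add_distrib]
        refine Finset.sum_congr rfl fun ⟨i, j⟩ _ => ?_
        rcases lt_trichotomy i j with hij | rfl | hji
        · simp [hij, hij.not_gt]
        · simp [f_diag]
        · simp [hji, hji.not_gt]

/-- The entries of a square matrix strictly above the diagonal, as a vector indexed by the pairs
`i < j`. On skew-symmetric matrices this is the identification of `𝔰𝔬(n)` with
`ℝ^{n(n-1)/2}`. -/
def strictUpper {n : ℕ} {α : Type*} (W : Matrix (Fin n) (Fin n) α) : PairIdx n → α :=
  fun p => W p.1.1 p.1.2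

theorem crossMat_transpose_mulVec_strictUpper {n : ℕ} (a : Fin n → ℝ)
    {W : Matrix (Fin n) (Fin n) ℝ} (W_skew : Wᵀ = -W) :
    (crossMat n a)ᵀ *ᵥ strictUpper W = a ᵥ* W := by
  have W_swap (i j : Fin n) : W j i = -W i j := congr_fun₂ W_skew i j
  have W_diag (i : Fin n) : W i i = 0 := self_eq_neg.mp (W_swap i i)
  ext k
  let f : Fin n × Fin n → ℝ := fun p => if p.2 = k then a p.1 * W p.1 p.2 else 0
  calc ((crossMat n a)ᵀ *ᵥ strictUpper W) k
      = ∑ p : PairIdx n, (f p + f p.1.swap) := by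
        refine Finset.sum_congr rfl fun p _ => ?_
        simp only [crossMat, strictUpper, transpose_apply, of_apply, f, Prod.fst_swap,
          Prod.snd_swap, W_swap p.1.1 p.1.2]
        split_ifs <;> ring
    _ = ∑ p, f p := sum_lt_add_swap_eq_sum f fun i => by simp [f, W_diag]
    _ = (a ᵥ* W) k := by simp [f, Fintype.sum_prod_type, vecMul, dotProduct]

theorem transpose_vecMulVec_sub_vecMulVec {ι R : Type*} [NonUnitalCommRing R] (b c : ι → R) :
    (vecMulVec b c - vecMulVec c b)ᵀ = -(vecMulVec b c - vecMulVec c b) := by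
  simp only [transpose_sub, transpose_vecMulVec, neg_sub]

theorem crossN_eq_strictUpper {n : ℕ} (b c : Fin n → ℝ) :
    crossN n b c = strictUpper (vecMulVec b c - vecMulVec c b) := by
  ext p
  simp only [crossN, strictUpper, Matrix.sub_apply, vecMulVec_apply, mul_comm]

/-- generalized Grassmann identity
`⟦a⟧ₙᵀ (b ×ₙ c) = ⟨a,b⟩·c - ⟨a,c⟩·b`. -/
theorem grassmann_identity (n : ℕ) (hn : 2 ≤ n) (a b c : Fin n → ℝ) :
    (crossMat n a)ᵀ.mulVec (crossN n b c) = (a ⬝ᵥ b) • c - (a ⬝ᵥ c) • b := by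
  rw [crossN_eq_strictUpper,
    crossMat_transpose_mulVec_strictUpper a (transpose_vecMulVec_sub_vecMulVec b c),
    vecMul_sub, vecMul_vecMulVec, vecMul_vecMulVec]
end

section
/- Generalized Jacobi identity: for every n ≥ 2 and all a, b, c ∈ ℝⁿ, ⟦a⟧ₙᵀ(b ×ₙ c) + ⟦b⟧ₙᵀ(c ×ₙ a) + ⟦c⟧ₙᵀ(a ×ₙ b) = 0. -/
open Matrix BigOperators

/-!
Pairing the left-hand side with an arbitrary `d ∈ ℝⁿ` turns each transpose `⟦x⟧ₙᵀ` into
`⟦x⟧ₙ d = x ×ₙ d`. What remains is a sum over the pairs `i < j` of expressions in the coordinates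
`i` and `j` alone, each of which vanishes by the Plücker relation for four vectors in the plane.
-/

theorem crossMat_mulVec (n : ℕ) (a b : Fin n → ℝ) : crossMat n a *ᵥ b = crossN n a b := by
  ext p
  simp [crossMat, crossN, mulVec, dotProduct, sub_mul, Finset.sum_sub_distrib]

theorem crossMat_transpose_mulVec_dotProduct (n : ℕ) (a d : Fin n → ℝ) (v : PairIdx n → ℝ) :
    (crossMat n a)ᵀ *ᵥ v ⬝ᵥ d = v ⬝ᵥ crossN n a d := by
  rw [mulVec_transpose, ← dotProduct_mulVec, crossMat_mulVec]

theorem crossN_mul_crossN_cyclic (n : ℕ) (a b c d : Fin n → ℝ) :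
    crossN n b c * crossN n a d + crossN n c a * crossN n b d + crossN n a b * crossN n c d =
      0 := by
  ext p
  simp only [crossN, Pi.add_apply, Pi.mul_apply, Pi.zero_apply]
  ring

theorem crossN_dotProduct_crossN_cyclic (n : ℕ) (a b c d : Fin n → ℝ) :
    crossN n b c ⬝ᵥ crossN n a d + crossN n c a ⬝ᵥ crossN n b d + crossN n a b ⬝ᵥ crossN n c d =
      0 := by
  simp only [dotProduct, ← Finset.sum_add_distrib]
  exact Finset.sum_eq_zero fun p _ => congrFun (crossN_mul_crossN_cyclic n a b c d) p

/-- generalized Jacobi identity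
`⟦a⟧ₙᵀ(b ×ₙ c) + ⟦b⟧ₙᵀ(c ×ₙ a) + ⟦c⟧ₙᵀ(a ×ₙ b) = 0`. -/
theorem jacobi_identity (n : ℕ) (hn : 2 ≤ n) (a b c : Fin n → ℝ) :
    (crossMat n a)ᵀ.mulVec (crossN n b c) + (crossMat n b)ᵀ.mulVec (crossN n c a) +
      (crossMat n c)ᵀ.mulVec (crossN n a b) = 0 := by
  refine dotProduct_eq_zero _ fun d => ?_
  simp only [add_dotProduct, crossMat_transpose_mulVec_dotProduct]
  exact crossN_dotProduct_crossN_cyclic n a b c d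
end

section
/- Generalized Room identity: for every n ≥ 2 and all a, b ∈ ℝⁿ, the matrix product satisfies ⟦a⟧ₙᵀ ⟦b⟧ₙ = ⟨b, a⟩·Idₙ − b ⊗ a as n×n matrices; in particular ⟦b⟧ₙᵀ ⟦b⟧ₙ = ‖b‖²·Idₙ − b ⊗ b is symmetric. -/
open Matrix BigOperators

/-!
The columns of `⟦a⟧` are the cross products `a × eₖ`, so the entries of `⟦a⟧ᵀ⟦b⟧` are the inner
products `⟨a × eₖ, b × eₗ⟩`, which the Binet–Cauchy identity
`⟨a × x, b × y⟩ = ⟨a, b⟩⟨x, y⟩ - ⟨a, y⟩⟨x, b⟩` evaluates. For the latter, the right-hand side is a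
double sum over all `(i, j)` whose diagonal terms vanish and whose `(i, j)` and `(j, i)` terms add
up to the product of the two minors at `i < j`.
-/

section IncreasingPairs

variable {ι M : Type*} [Fintype ι] [LinearOrder ι] [AddCommMonoid M]

theorem sum_increasing_pairs_eq_sum_sum_ite (f : ι → ι → M) :
    ∑ p : {p : ι × ι // p.1 < p.2}, f p.1.1 p.1.2 = ∑ i, ∑ j, if i < j then f i j else 0 := by
  rw [← Finset.sum_subtype (Finset.univ.filter fun p : ι × ι => p.1 < p.2) (by simp)
    fun p => f p.1 p.2, Finset.sum_filter, Fintype.sum_prod_type]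

theorem sum_sum_eq_sum_diag_add_sum_increasing_pairs (f : ι → ι → M) :
    ∑ i, ∑ j, f i j =
      ∑ i, f i i + ∑ p : {p : ι × ι // p.1 < p.2}, (f p.1.1 p.1.2 + f p.1.2 p.1.1) := by
  have trichotomy (i j : ι) : f i j =
      (if i = j then f i j else 0) +
        ((if i < j then f i j else 0) + if j < i then f i j else 0) := by
    rcases lt_trichotomy i j with h | rfl | h
    · simp [h, h.ne, h.not_gt]
    · simp
    · simp [h, h.ne', h.not_gt]
  have sum_decreasing : ∑ i, ∑ j, (if j < i then f i j else 0) =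
      ∑ p : {p : ι × ι // p.1 < p.2}, f p.1.2 p.1.1 := by
    rw [Finset.sum_comm, sum_increasing_pairs_eq_sum_sum_ite fun i j => f j i]
  calc ∑ i, ∑ j, f i j
      = ∑ i, ∑ j, (if i = j then f i j else 0) +
          (∑ i, ∑ j, (if i < j then f i j else 0) + ∑ i, ∑ j, if j < i then f i j else 0) := by
        simp only [← Finset.sum_add_distrib, ← trichotomy]
    _ = ∑ i, f i i + ∑ p : {p : ι × ι // p.1 < p.2}, (f p.1.1 p.1.2 + f p.1.2 p.1.1) := by
        rw [sum_decreasing, ← sum_increasing_pairs_eq_sum_sum_ite, Finset.sum_add_distrib]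
        simp

end IncreasingPairs

section PairCross

variable {ι R : Type*} [LinearOrder ι] [CommRing R]

/-- The generalized cross product `crossN` for an arbitrary linearly ordered index type and
commutative ring: the `2 × 2` minors of the matrix with rows `a` and `b`, one for each increasing
pair of columns. -/
def pairCross (a b : ι → R) : {p : ι × ι // p.1 < p.2} → R :=
  fun p => a p.1.1 * b p.1.2 - a p.1.2 * b p.1.1

/-- The matrix of `b ↦ pairCross a b`. Its entries are written as in `crossMat`, so that
`crossMat n a` is definitionally the case `ι = Fin n`, `R = ℝ`. -/
def pairCrossMatrix (a : ι → R) : Matrix {p : ι × ι // p.1 < p.2} ι R :=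
  Matrix.of fun p k =>
    a p.1.1 * (if p.1.2 = k then 1 else 0) - a p.1.2 * (if p.1.1 = k then 1 else 0)

theorem pairCrossMatrix_col (a : ι → R) (k : ι) :
    (pairCrossMatrix a).col k = pairCross a (Pi.single k 1) := by
  ext p
  simp [pairCrossMatrix, pairCross, Pi.single_apply]

variable [Fintype ι]

theorem pairCross_dotProduct_pairCross (a x b y : ι → R) :
    pairCross a x ⬝ᵥ pairCross b y = (a ⬝ᵥ b) * (x ⬝ᵥ y) - (a ⬝ᵥ y) * (x ⬝ᵥ b) := by
  let f (i j : ι) : R := a i * b i * (x j * y j) - a i * y i * (x j * b j)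
  have f_diag (i : ι) : f i i = 0 := by ring
  have f_symmetrized (p : {p : ι × ι // p.1 < p.2}) :
      pairCross a x p * pairCross b y p = f p.1.1 p.1.2 + f p.1.2 p.1.1 := by
    simp only [pairCross, f]
    ring
  calc pairCross a x ⬝ᵥ pairCross b y
      = ∑ p : {p : ι × ι // p.1 < p.2}, (f p.1.1 p.1.2 + f p.1.2 p.1.1) :=
        Finset.sum_congr rfl fun p _ => f_symmetrized p
    _ = ∑ i, ∑ j, f i j := by
        simp [sum_sum_eq_sum_diag_add_sum_increasing_pairs f, f_diag]
    _ = (a ⬝ᵥ b) * (x ⬝ᵥ y) - (a ⬝ᵥ y) * (x ⬝ᵥ b) := by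
        simp only [f, dotProduct, Finset.sum_mul_sum, Finset.sum_sub_distrib]

theorem room_identity_general (a b : ι → R) :
    (pairCrossMatrix a)ᵀ * pairCrossMatrix b =
      (b ⬝ᵥ a) • (1 : Matrix ι ι R) - vecMulVec b a := by
  ext k l
  calc ((pairCrossMatrix a)ᵀ * pairCrossMatrix b) k l
      = (pairCrossMatrix a).col k ⬝ᵥ (pairCrossMatrix b).col l := rfl
    _ = (a ⬝ᵥ b) * (Pi.single k 1 ⬝ᵥ Pi.single l 1) -
          (a ⬝ᵥ Pi.single l 1) * (Pi.single k 1 ⬝ᵥ b) := by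
        rw [pairCrossMatrix_col, pairCrossMatrix_col, pairCross_dotProduct_pairCross]
    _ = ((b ⬝ᵥ a) • (1 : Matrix ι ι R) - vecMulVec b a) k l := by
        simp [dotProduct_comm a b, vecMulVec_apply, Matrix.one_apply, Pi.single_apply, mul_comm,
          eq_comm (a := k)]

end PairCross

/-- generalized Room identity
`⟦a⟧ₙᵀ ⟦b⟧ₙ = ⟨b,a⟩·Idₙ - b ⊗ a`; in particular
`⟦b⟧ₙᵀ ⟦b⟧ₙ = ‖b‖²·Idₙ - b ⊗ b` is symmetric. -/
theorem room_identity (n : ℕ) (hn : 2 ≤ n) (a b : Fin n → ℝ) :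
    (crossMat n a)ᵀ * crossMat n b
        = (b ⬝ᵥ a) • (1 : Matrix (Fin n) (Fin n) ℝ) - vecMulVec b a ∧
    (crossMat n b)ᵀ * crossMat n b
        = (b ⬝ᵥ b) • (1 : Matrix (Fin n) (Fin n) ℝ) - vecMulVec b b ∧
    ((crossMat n b)ᵀ * crossMat n b).IsSymm := by
  refine ⟨room_identity_general a b, room_identity_general b b, ?_⟩
  rw [Matrix.IsSymm, transpose_mul, transpose_transpose]
end

section
/- For every n ≥ 2 and all a, b ∈ ℝⁿ, the dyadic product can be recovered from the matrix product: b ⊗ a = (tr(⟦a⟧ₙᵀ ⟦b⟧ₙ)/(n−1))·Idₙ − ⟦a⟧ₙᵀ ⟦b⟧ₙ. -/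
open Matrix BigOperators

/-!
In the entries of `⟦a⟧ₙᵀ ⟦b⟧ₙ`, the term of the pair `i < j` is `g i j + g j i` for a function `g`
that vanishes on the diagonal, so the sum over pairs is the full double sum of `g`. This gives
`⟦a⟧ₙᵀ ⟦b⟧ₙ = (a ⬝ b) Idₙ - b ⊗ a`, whose trace `(n - 1) (a ⬝ b)` determines the scalar `a ⬝ b`.
-/

section PairSums

variable {ι M : Type*} [Fintype ι] [AddCommMonoid M]

theorem sum_subtype_lt_eq_sum_sum_Ioi [Preorder ι] [DecidableLT ι] [LocallyFiniteOrderTop ι]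
    (f : ι → ι → M) :
    ∑ p : {p : ι × ι // p.1 < p.2}, f p.1.1 p.1.2 = ∑ i, ∑ j ∈ Finset.Ioi i, f i j := by
  rw [Finset.sum_sigma', ← Finset.sum_subtype (Finset.univ.filter fun p : ι × ι => p.1 < p.2)
    (by simp) fun p => f p.1 p.2]
  exact Finset.sum_nbij' (fun p => ⟨p.1, p.2⟩) (fun s => (s.1, s.2))
    (by simp) (by simp) (by simp) (by simp) (by simp)

theorem sum_subtype_lt_add_swap [LinearOrder ι] [LocallyFiniteOrderTop ι]
    [LocallyFiniteOrderBot ι] (f : ι → ι → M) (hf : ∀ i, f i i = 0) :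
    ∑ p : {p : ι × ι // p.1 < p.2}, (f p.1.1 p.1.2 + f p.1.2 p.1.1) = ∑ i, ∑ j, f i j := by
  calc ∑ p : {p : ι × ι // p.1 < p.2}, (f p.1.1 p.1.2 + f p.1.2 p.1.1)
      = ∑ i, ∑ j ∈ Finset.Ioi i, (f i j + f j i) :=
        sum_subtype_lt_eq_sum_sum_Ioi fun i j => f i j + f j i
    _ = ∑ i, ∑ j ∈ {i}ᶜ, f i j :=
        Finset.sum_sum_Ioi_add_eq_sum_sum_off_diag fun i j => f j i
    _ = ∑ i, ∑ j, f i j := by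
        refine Finset.sum_congr rfl fun i _ => ?_
        rw [Fintype.sum_eq_add_sum_compl i, hf, zero_add]

end PairSums

section CrossMat

variable {n : ℕ} (a b : Fin n → ℝ)

theorem crossMat_transpose_mul_crossMat :
    (crossMat n a)ᵀ * crossMat n b = (a ⬝ᵥ b) • 1 - vecMulVec b a := by
  ext k l
  let δ : Matrix (Fin n) (Fin n) ℝ := 1
  let g (i j : Fin n) : ℝ := a i * b i * (δ j k * δ j l) - a i * b j * (δ j k * δ i l)
  calc ((crossMat n a)ᵀ * crossMat n b) k l
      = ∑ p : PairIdx n, (g p.1.1 p.1.2 + g p.1.2 p.1.1) := by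
        simp only [mul_apply, transpose_apply, crossMat, of_apply, g, δ, one_apply]
        exact Finset.sum_congr rfl fun p _ => by ring
    _ = ∑ i, ∑ j, g i j := sum_subtype_lt_add_swap g fun i => sub_self _
    _ = (a ⬝ᵥ b) * δ k l - a l * b k := by
        simp [g, δ, one_apply, dotProduct, eq_comm]
    _ = ((a ⬝ᵥ b) • 1 - vecMulVec b a) k l := by
        simp [δ, vecMulVec_apply, mul_comm]

theorem trace_crossMat_transpose_mul_crossMat :
    ((crossMat n a)ᵀ * crossMat n b).trace = (a ⬝ᵥ b) * (n - 1) := by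
  rw [crossMat_transpose_mul_crossMat, trace_sub, trace_smul, trace_one, trace_vecMulVec,
    Fintype.card_fin, smul_eq_mul, dotProduct_comm b a]
  ring

end CrossMat

/-- the dyadic product is recovered from the matrix product:
`b ⊗ a = (tr(⟦a⟧ₙᵀ ⟦b⟧ₙ)/(n-1))·Idₙ - ⟦a⟧ₙᵀ ⟦b⟧ₙ`. -/
theorem dyadic_from_crossMat (n : ℕ) (hn : 2 ≤ n) (a b : Fin n → ℝ) :
    vecMulVec b a
      = (((crossMat n a)ᵀ * crossMat n b).trace / ((n : ℝ) - 1)) •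
          (1 : Matrix (Fin n) (Fin n) ℝ) - (crossMat n a)ᵀ * crossMat n b := by
  have hn_sub_one : (n : ℝ) - 1 ≠ 0 := sub_ne_zero.mpr (by exact_mod_cast (by omega : n ≠ 1))
  rw [trace_crossMat_transpose_mul_crossMat, mul_div_cancel_right₀ _ hn_sub_one,
    crossMat_transpose_mul_crossMat, sub_sub_cancel]
end
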